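/- Let t_n denote the cardinality of NC(T_n) (so t_0 = 1, t_1 = 2, t_2 = 5, …). In the ring of formal power series ℤ⟦X⟧, the generating function T(X) = Σ_{n≥0} t_n X^n satisfies (1 − 2X)^2 · T(X) = (1 − X)^2; equivalently T(X) = (1−X)^2/(1−2X)^2. -/

import Mathlib

open Finset

/-- A finpartition of a finite set of points in the plane is *noncrossing* if the
convex hulls (over `ℝ`) of its blocks are pairwise disjoint. -/
def IsNoncrossing {P : Finset ℂ} (π : Finpartition P) : Prop :=
  (π.parts : Set (Finset ℂ)).Pairwise fun B₁ B₂ =>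
    Disjoint (convexHull ℝ (B₁ : Set ℂ)) (convexHull ℝ (B₂ : Set ℂ))

/-- The poset `NC(P)` of noncrossing partitions of `P`, ordered by refinement:
`π ≤ μ` iff every block of `μ` is a union of blocks of `π`. -/
abbrev NC (P : Finset ℂ) : Type := {π : Finpartition P // IsNoncrossing π}

/-- The blocks of a noncrossing partition. -/
def NC.parts {P : Finset ℂ} (π : NC P) : Finset (Finset ℂ) := π.1.parts

/-- Two points lie in a common block of a noncrossing partition. -/
def NC.SameBlock {P : Finset ℂ} (π : NC P) (a b : ℂ) : Prop :=
  ∃ B ∈ π.parts, a ∈ B ∧ b ∈ B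

/-- The configuration `T_n = {1, …, n} ∪ {i} ⊆ ℂ`: the points `x_k = k` for
`1 ≤ k ≤ n` together with `y = i`. -/
noncomputable def Tconfig (n : ℕ) : Finset ℂ :=
  ((Finset.Icc 1 n).image fun k : ℕ => (k : ℂ)) ∪ {Complex.I}

lemma mem_Tconfig_nat {n k : ℕ} : (k : ℂ) ∈ Tconfig n ↔ 1 ≤ k ∧ k ≤ n := by
  have h : (k : ℂ) ≠ Complex.I := by
    intro h
    have := congrArg Complex.im h
    simp at this
  simp [Tconfig, h]

lemma mem_Tconfig_I {n : ℕ} : Complex.I ∈ Tconfig n := by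
  simp [Tconfig]

lemma mem_Tconfig_cases {n : ℕ} {z : ℂ} (hz : z ∈ Tconfig n) :
    (∃ k : ℕ, 1 ≤ k ∧ k ≤ n ∧ z = k) ∨ z = Complex.I := by
  simp only [Tconfig, Finset.mem_union, Finset.mem_image, Finset.mem_Icc,
    Finset.mem_singleton] at hz
  rcases hz with ⟨k, hk, rfl⟩ | h
  · exact Or.inl ⟨k, hk.1, hk.2, rfl⟩
  · exact Or.inr h

/-- Blocks meet the real line in intervals. -/
def LineConvex {n : ℕ} (π : Finpartition (Tconfig n)) : Prop :=
  ∀ j k l : ℕ, 1 ≤ j → j ≤ k → k ≤ l → l ≤ n → π.part (j : ℂ) = π.part (l : ℂ) →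
    π.part (k : ℂ) = π.part (l : ℂ)

lemma hull_disjoint {A B : Set ℂ} (f : ℂ →ₗ[ℝ] ℝ) (a : ℝ) (hA : ∀ z ∈ A, f z ≤ a)
    (hB : ∀ z ∈ B, a < f z) : Disjoint (convexHull ℝ A) (convexHull ℝ B) := by
  have h1 : convexHull ℝ A ⊆ {z | f z ≤ a} :=
    convexHull_min hA (convex_halfSpace_le f.isLinear a)
  have h2 : convexHull ℝ B ⊆ {z | a < f z} :=
    convexHull_min hB (convex_halfSpace_gt f.isLinear a)
  rw [Set.disjoint_left]
  intro z hz hz'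
  have h4 : f z ≤ a := h1 hz
  have h3 : a < f z := h2 hz'
  exact absurd h3 (not_lt.2 h4)

/-- The linear functional `re + a * im`. -/
noncomputable def tilt (a : ℝ) : ℂ →ₗ[ℝ] ℝ := Complex.reLm + a • Complex.imLm

lemma tilt_nat (a : ℝ) (k : ℕ) : tilt a k = k := by simp [tilt]

lemma tilt_I (a : ℝ) : tilt a Complex.I = a := by simp [tilt]

lemma hull_disjoint_aux {n : ℕ} {π : Finpartition (Tconfig n)} (h : LineConvex π)
    {B₁ B₂ : Finset ℂ} (h1 : B₁ ∈ π.parts) (h2 : B₂ ∈ π.parts) (hne : B₁ ≠ B₂)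
    (hI : Complex.I ∉ B₂) :
    Disjoint (convexHull ℝ (B₁ : Set ℂ)) (convexHull ℝ (B₂ : Set ℂ)) := by
  have nat2 : ∀ z ∈ B₂, ∃ k : ℕ, 1 ≤ k ∧ k ≤ n ∧ z = k := by
    intro z hz
    rcases mem_Tconfig_cases (π.le h2 hz) with h | rfl
    · exact h
    · exact absurd hz hI
  have cases1 : ∀ z ∈ B₁, (∃ k : ℕ, 1 ≤ k ∧ k ≤ n ∧ z = k) ∨ z = Complex.I :=
    fun z hz => mem_Tconfig_cases (π.le h1 hz)
  have rng1 : ∀ k : ℕ, (k : ℂ) ∈ B₁ → 1 ≤ k ∧ k ≤ n :=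
    fun k hk => mem_Tconfig_nat.1 (π.le h1 hk)
  have rng2 : ∀ k : ℕ, (k : ℂ) ∈ B₂ → 1 ≤ k ∧ k ≤ n :=
    fun k hk => mem_Tconfig_nat.1 (π.le h2 hk)
  have p1 : ∀ z, z ∈ B₁ → π.part z = B₁ := fun z hz => π.part_eq_of_mem h1 hz
  have p2 : ∀ z, z ∈ B₂ → π.part z = B₂ := fun z hz => π.part_eq_of_mem h2 hz
  have notBetween1 : ∀ j k l : ℕ, (j : ℂ) ∈ B₁ → (k : ℂ) ∈ B₂ → (l : ℂ) ∈ B₁ →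
      j ≤ k → k ≤ l → False := by
    intro j k l hj hk hl hjk hkl
    have := h j k l (rng1 j hj).1 hjk hkl (rng1 l hl).2 (by rw [p1 _ hj, p1 _ hl])
    rw [p1 _ hl, p2 _ hk] at this
    exact hne this.symm
  have notBetween2 : ∀ j k l : ℕ, (j : ℂ) ∈ B₂ → (k : ℂ) ∈ B₁ → (l : ℂ) ∈ B₂ →
      j ≤ k → k ≤ l → False := by
    intro j k l hj hk hl hjk hkl
    have := h j k l (rng2 j hj).1 hjk hkl (rng2 l hl).2 (by rw [p2 _ hj, p2 _ hl])
    rw [p2 _ hl, p1 _ hk] at this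
    exact hne this
  obtain ⟨b, hb⟩ := π.nonempty_of_mem_parts h2
  obtain ⟨b, -, -, rfl⟩ := nat2 b hb
  by_cases hS : ∃ k : ℕ, (k : ℂ) ∈ B₁
  · obtain ⟨s, hs⟩ := hS
    rcases le_total s b with hsb | hsb
    · -- `B₁` lies to the left of `B₂`
      have key : ∀ j k : ℕ, (j : ℂ) ∈ B₁ → (k : ℂ) ∈ B₂ → j < k := by
        intro j k hj hk
        by_contra hlt
        have hlt : k ≤ j := not_lt.1 hlt
        rcases le_total s k with h' | h'
        · exact notBetween1 s k j hs hk hj h' hlt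
        · exact notBetween2 k s b hk hs hb h' hsb
      let S := (Finset.Icc 1 n).filter fun k : ℕ => (k : ℂ) ∈ B₁
      have hSne : S.Nonempty := ⟨s, by simp [S, hs, rng1 s hs]⟩
      obtain ⟨a, haS, hamax⟩ := S.exists_max_image id hSne
      have ha : (a : ℂ) ∈ B₁ := (Finset.mem_filter.1 haS).2
      refine hull_disjoint (tilt a) a ?_ ?_
      · intro z hz
        rcases cases1 z hz with ⟨k, hk1, hk2, rfl⟩ | rfl
        · rw [tilt_nat]
          have : k ≤ a := hamax k (by simp only [S, Finset.mem_filter, Finset.mem_Icc]; exact ⟨⟨hk1, hk2⟩, hz⟩)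
          exact_mod_cast this
        · rw [tilt_I]
      · intro z hz
        obtain ⟨k, -, -, rfl⟩ := nat2 z hz
        rw [tilt_nat]
        exact_mod_cast key a k ha hz
    · have key : ∀ j k : ℕ, (j : ℂ) ∈ B₁ → (k : ℂ) ∈ B₂ → k < j := by
        intro j k hj hk
        by_contra hlt
        have hlt : j ≤ k := not_lt.1 hlt
        rcases le_total s k with h' | h'
        · exact notBetween2 b s k hb hs hk hsb h'
        · exact notBetween1 j k s hj hk hs hlt h'
      let S := (Finset.Icc 1 n).filter fun k : ℕ => (k : ℂ) ∈ B₁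
      have hSne : S.Nonempty := ⟨s, by simp [S, hs, rng1 s hs]⟩
      obtain ⟨a, haS, hamin⟩ := S.exists_min_image id hSne
      have ha : (a : ℂ) ∈ B₁ := (Finset.mem_filter.1 haS).2
      refine hull_disjoint (-tilt a) (-a) ?_ ?_
      · intro z hz
        rw [LinearMap.neg_apply, neg_le_neg_iff]
        rcases cases1 z hz with ⟨k, hk1, hk2, rfl⟩ | rfl
        · rw [tilt_nat]
          have : a ≤ k := hamin k (by simp only [S, Finset.mem_filter, Finset.mem_Icc]; exact ⟨⟨hk1, hk2⟩, hz⟩)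
          exact_mod_cast this
        · rw [tilt_I]
      · intro z hz
        obtain ⟨k, -, -, rfl⟩ := nat2 z hz
        rw [LinearMap.neg_apply, neg_lt_neg_iff, tilt_nat]
        exact_mod_cast key a k ha hz
  · refine hull_disjoint (-Complex.imLm) (-1) ?_ ?_
    · intro z hz
      rcases cases1 z hz with ⟨k, -, -, rfl⟩ | rfl
      · exact absurd ⟨k, hz⟩ hS
      · simp
    · intro z hz
      obtain ⟨k, -, -, rfl⟩ := nat2 z hz
      simp

lemma isNoncrossing_iff {n : ℕ} (π : Finpartition (Tconfig n)) :
    IsNoncrossing π ↔ LineConvex π := by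
  constructor
  · intro h j k l hj hjk hkl hl hjl
    by_contra hne
    have mj : (j : ℂ) ∈ Tconfig n := mem_Tconfig_nat.2 ⟨hj, by omega⟩
    have mk : (k : ℂ) ∈ Tconfig n := mem_Tconfig_nat.2 ⟨by omega, by omega⟩
    have ml : (l : ℂ) ∈ Tconfig n := mem_Tconfig_nat.2 ⟨by omega, by omega⟩
    have hd : Disjoint (convexHull ℝ (π.part (k : ℂ) : Set ℂ))
        (convexHull ℝ (π.part (l : ℂ) : Set ℂ)) := h (π.part_mem.2 mk) (π.part_mem.2 ml) hne
    rw [Set.disjoint_left] at hd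
    refine hd (subset_convexHull ℝ _ (Finset.mem_coe.2 (π.mem_part_self.2 mk))) ?_
    have hj' : (j : ℂ) ∈ convexHull ℝ (π.part (l : ℂ) : Set ℂ) :=
      subset_convexHull ℝ _ (by rw [← hjl]; simpa using mj)
    have hl' : (l : ℂ) ∈ convexHull ℝ (π.part (l : ℂ) : Set ℂ) :=
      subset_convexHull ℝ _ (by simpa using ml)
    refine (convex_convexHull ℝ _).segment_subset hj' hl' ?_
    have hseg : (k : ℝ) ∈ segment ℝ (j : ℝ) (l : ℝ) := by
      rw [segment_eq_Icc (by exact_mod_cast hjk.trans hkl)]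
      exact ⟨by exact_mod_cast hjk, by exact_mod_cast hkl⟩
    obtain ⟨a, b, ha, hb, hab, he⟩ := hseg
    refine ⟨a, b, ha, hb, hab, ?_⟩
    have := congrArg (fun x : ℝ => (x : ℂ)) he
    simpa using this
  · intro h B₁ h1 B₂ h2 hne
    by_cases hI : Complex.I ∈ B₂
    · have : Complex.I ∉ B₁ := by
        intro hI'
        exact hne ((π.part_eq_of_mem h1 hI').symm.trans (π.part_eq_of_mem h2 hI))
      exact (hull_disjoint_aux h h2 h1 hne.symm this).symm
    · exact hull_disjoint_aux h h1 h2 hne hI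

/-- The starting points (other than 1) of the intervals. -/
noncomputable def dmap {n : ℕ} (π : Finpartition (Tconfig n)) : Finset ℕ :=
  open Classical in
  (Finset.Icc 2 n).filter fun k => π.part ((k - 1 : ℕ) : ℂ) ≠ π.part (k : ℂ)

/-- The first point in the block of `i`, or `0`. -/
noncomputable def emap {n : ℕ} (π : Finpartition (Tconfig n)) : ℕ :=
  open Classical in
  if h : ∃ k : ℕ, (1 ≤ k ∧ k ≤ n) ∧ π.part (k : ℂ) = π.part Complex.I then Nat.find h else 0

lemma emap_eq_zero {n : ℕ} {π : Finpartition (Tconfig n)}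
    (h : ¬ ∃ k : ℕ, (1 ≤ k ∧ k ≤ n) ∧ π.part (k : ℂ) = π.part Complex.I) : emap π = 0 := by
  unfold emap
  rw [dif_neg h]

lemma emap_spec {n : ℕ} {π : Finpartition (Tconfig n)}
    (h : ∃ k : ℕ, (1 ≤ k ∧ k ≤ n) ∧ π.part (k : ℂ) = π.part Complex.I) :
    ((1 ≤ emap π ∧ emap π ≤ n) ∧ π.part (emap π : ℂ) = π.part Complex.I) ∧
    ∀ j < emap π, 1 ≤ j → π.part (j : ℂ) ≠ π.part Complex.I := by
  classical
  have he : emap π = Nat.find h := by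
    unfold emap
    rw [dif_pos h]
  rw [he]
  refine ⟨Nat.find_spec h, ?_⟩
  intro j hj h1 heq
  have hn := (Nat.find_spec h).1.2
  exact Nat.find_min h hj ⟨⟨h1, by omega⟩, heq⟩

lemma emap_unique {n : ℕ} {π : Finpartition (Tconfig n)} {e : ℕ} (he : 1 ≤ e) (hen : e ≤ n)
    (h : π.part (e : ℂ) = π.part Complex.I)
    (hlt : ∀ j < e, 1 ≤ j → π.part (j : ℂ) ≠ π.part Complex.I) : emap π = e := by
  obtain ⟨⟨⟨a, b⟩, c⟩, d⟩ := emap_spec (π := π) ⟨e, ⟨he, hen⟩, h⟩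
  rcases lt_trichotomy (emap π) e with h' | h' | h'
  · exact absurd c (hlt _ h' a)
  · exact h'
  · exact absurd h (d _ h' he)

lemma mem_dmap {n : ℕ} {π : Finpartition (Tconfig n)} {k : ℕ} :
    k ∈ dmap π ↔ (2 ≤ k ∧ k ≤ n) ∧ π.part ((k - 1 : ℕ) : ℂ) ≠ π.part (k : ℂ) := by
  simp [dmap]

lemma emap_mem {n : ℕ} {π : Finpartition (Tconfig n)} :
    emap π ∈ insert 0 (insert 1 (dmap π)) := by
  simp only [Finset.mem_insert, mem_dmap]
  by_cases h : ∃ k : ℕ, (1 ≤ k ∧ k ≤ n) ∧ π.part (k : ℂ) = π.part Complex.I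
  · obtain ⟨⟨⟨a, b⟩, c⟩, d⟩ := emap_spec h
    by_cases h1 : emap π = 1
    · exact Or.inr (Or.inl h1)
    · refine Or.inr (Or.inr ⟨⟨by omega, b⟩, ?_⟩)
      rw [c]
      exact d _ (by omega) (by omega)
  · exact Or.inl (emap_eq_zero h)

lemma part_nat_iff {n : ℕ} {π : Finpartition (Tconfig n)} (h : LineConvex π) {k l : ℕ}
    (hk : 1 ≤ k) (hkl : k ≤ l) (hl : l ≤ n) :
    π.part (k : ℂ) = π.part (l : ℂ) ↔ ∀ m, k < m → m ≤ l → m ∉ dmap π := by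
  constructor
  · intro he m hm hml hmem
    apply (mem_dmap.1 hmem).2
    rw [h k (m - 1) l hk (by omega) (by omega) hl he, h k m l hk (by omega) (by omega) hl he]
  · intro hm
    induction l, hkl using Nat.le_induction with
    | base => rfl
    | succ l hkl ih =>
      rw [ih (by omega) fun m h1 h2 => hm m h1 (by omega)]
      have := hm (l + 1) (by omega) le_rfl
      rw [mem_dmap] at this
      by_contra hne
      exact this ⟨⟨by omega, hl⟩, by simpa using hne⟩

lemma part_I_iff {n : ℕ} {π : Finpartition (Tconfig n)} {k : ℕ} (hk : 1 ≤ k) (hkn : k ≤ n) :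
    π.part (k : ℂ) = π.part Complex.I ↔ 1 ≤ emap π ∧ π.part (k : ℂ) = π.part (emap π : ℂ) := by
  constructor
  · intro h
    obtain ⟨⟨⟨a, b⟩, c⟩, d⟩ := emap_spec (π := π) ⟨k, ⟨hk, hkn⟩, h⟩
    exact ⟨a, h.trans c.symm⟩
  · rintro ⟨h1, h⟩
    by_cases hex : ∃ k : ℕ, (1 ≤ k ∧ k ≤ n) ∧ π.part (k : ℂ) = π.part Complex.I
    · exact h.trans (emap_spec hex).1.2
    · rw [emap_eq_zero hex] at h1
      omega

lemma finpartition_ext {P : Finset ℂ} {π σ : Finpartition P}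
    (h : ∀ a ∈ P, ∀ b ∈ P, π.part a = π.part b ↔ σ.part a = σ.part b) : π = σ := by
  have hp : ∀ a ∈ P, π.part a = σ.part a := by
    intro a ha
    ext b
    by_cases hb : b ∈ P
    · rw [π.mem_part_iff_part_eq_part hb ha, σ.mem_part_iff_part_eq_part hb ha]
      exact h _ hb _ ha
    · exact ⟨fun h => absurd (π.part_subset a h) hb, fun h => absurd (σ.part_subset a h) hb⟩
  apply Finpartition.ext
  ext B
  constructor
  · intro hB
    obtain ⟨a, ha⟩ := π.nonempty_of_mem_parts hB
    have haP := π.le hB ha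
    rw [← π.part_eq_of_mem hB ha, hp a haP]
    exact σ.part_mem.2 haP
  · intro hB
    obtain ⟨a, ha⟩ := σ.nonempty_of_mem_parts hB
    have haP := σ.le hB ha
    rw [← σ.part_eq_of_mem hB ha, ← hp a haP]
    exact π.part_mem.2 haP

lemma map_injective {n : ℕ} {π σ : Finpartition (Tconfig n)} (hπ : LineConvex π)
    (hσ : LineConvex σ) (hd : dmap π = dmap σ) (he : emap π = emap σ) : π = σ := by
  have hnat' : ∀ k l : ℕ, 1 ≤ k → k ≤ l → l ≤ n →
      (π.part (k : ℂ) = π.part (l : ℂ) ↔ σ.part (k : ℂ) = σ.part (l : ℂ)) := by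
    intro k l hk hkl hl
    rw [part_nat_iff hπ hk hkl hl, part_nat_iff hσ hk hkl hl, hd]
  have hnat : ∀ k l : ℕ, 1 ≤ k → k ≤ n → 1 ≤ l → l ≤ n →
      (π.part (k : ℂ) = π.part (l : ℂ) ↔ σ.part (k : ℂ) = σ.part (l : ℂ)) := by
    intro k l hk hk' hl hl'
    rcases le_total k l with h | h
    · exact hnat' k l hk h hl'
    · rw [eq_comm, hnat' l k hl h hk', eq_comm]
  have hen : emap π ≤ n := by
    by_cases h : ∃ k : ℕ, (1 ≤ k ∧ k ≤ n) ∧ π.part (k : ℂ) = π.part Complex.I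
    · exact (emap_spec h).1.1.2
    · rw [emap_eq_zero h]
      omega
  have hI : ∀ k : ℕ, 1 ≤ k → k ≤ n →
      (π.part (k : ℂ) = π.part Complex.I ↔ σ.part (k : ℂ) = σ.part Complex.I) := by
    intro k hk hkn
    rw [part_I_iff hk hkn, part_I_iff hk hkn, ← he]
    constructor
    · rintro ⟨h1, h2⟩
      exact ⟨h1, (hnat k _ hk hkn h1 hen).1 h2⟩
    · rintro ⟨h1, h2⟩
      exact ⟨h1, (hnat k _ hk hkn h1 hen).2 h2⟩
  apply finpartition_ext
  intro a ha b hb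
  rcases mem_Tconfig_cases ha with ⟨k, hk, hkn, rfl⟩ | rfl <;>
  rcases mem_Tconfig_cases hb with ⟨l, hl, hln, rfl⟩ | rfl
  · exact hnat k l hk hkn hl hln
  · exact hI k hk hkn
  · rw [eq_comm, hI l hl hln, eq_comm]
  · simp

/-- Number of elements of `E` up to `k`. -/
def cnt (E : Finset ℕ) (k : ℕ) : ℕ := (E.filter (· ≤ k)).card

lemma cnt_mono (E : Finset ℕ) {j k : ℕ} (h : j ≤ k) : cnt E j ≤ cnt E k := by
  apply Finset.card_le_card
  intro x
  simp only [Finset.mem_filter]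
  rintro ⟨a, b⟩
  exact ⟨a, b.trans h⟩

lemma cnt_lt {E : Finset ℕ} {j k : ℕ} (hk : k ∈ E) (h : j < k) : cnt E j < cnt E k := by
  apply Finset.card_lt_card
  rw [Finset.ssubset_iff_of_subset]
  · exact ⟨k, by simp [hk], by simp [h]⟩
  · intro x
    simp only [Finset.mem_filter]
    rintro ⟨a, b⟩
    exact ⟨a, b.trans h.le⟩

lemma cnt_eq {E : Finset ℕ} {k : ℕ} (hk : k + 1 ∉ E) : cnt E k = cnt E (k + 1) := by
  unfold cnt
  congr 1
  apply Finset.filter_congr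
  intro x hx
  have : x ≠ k + 1 := by
    rintro rfl
    exact hk hx
  omega

/-- Label of a point. -/
noncomputable def lab (E : Finset ℕ) (e : ℕ) (z : ℂ) : ℕ :=
  if z.im = 0 then cnt E ⌊z.re⌋₊ else cnt E e

lemma lab_nat (E : Finset ℕ) (e k : ℕ) : lab E e k = cnt E k := by simp [lab]

lemma lab_I (E : Finset ℕ) (e : ℕ) : lab E e Complex.I = cnt E e := by simp [lab]

lemma exists_finpartition {P : Finset ℂ} (f : ℂ → ℕ) :
    ∃ π : Finpartition P, ∀ a ∈ P, ∀ b ∈ P, π.part a = π.part b ↔ f a = f b := by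
  classical
  refine ⟨Finpartition.ofSetSetoid (Setoid.ker f) P, ?_⟩
  intro a ha b hb
  rw [← Finpartition.mem_part_iff_part_eq_part _ ha hb]
  have := Finpartition.mem_part_ofSetSetoid_iff_rel (s := Setoid.ker f) P (a := b) (b := a)
  have h2 : a ∈ (Finpartition.ofSetSetoid (Setoid.ker f) P).part b ↔ f a = f b := by
    rw [this, Setoid.ker_def]
    exact ⟨fun h => h.2.2.symm, fun h => ⟨hb, ha, h.symm⟩⟩
  convert h2

lemma map_surjective {n : ℕ} (hn : 1 ≤ n) {D : Finset ℕ} (hD : D ⊆ Finset.Icc 2 n) {e : ℕ}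
    (he : e ∈ insert 0 (insert 1 D)) :
    ∃ π : Finpartition (Tconfig n), LineConvex π ∧ dmap π = D ∧ emap π = e := by
  obtain ⟨π, hπ⟩ := exists_finpartition (P := Tconfig n) (lab (insert 1 D) e)
  have hnat : ∀ k l : ℕ, 1 ≤ k → k ≤ n → 1 ≤ l → l ≤ n →
      (π.part (k : ℂ) = π.part (l : ℂ) ↔ cnt (insert 1 D) k = cnt (insert 1 D) l) := by
    intro k l hk hkn hl hln
    rw [hπ _ (mem_Tconfig_nat.2 ⟨hk, hkn⟩) _ (mem_Tconfig_nat.2 ⟨hl, hln⟩), lab_nat, lab_nat]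
  have hI : ∀ k : ℕ, 1 ≤ k → k ≤ n →
      (π.part (k : ℂ) = π.part Complex.I ↔ cnt (insert 1 D) k = cnt (insert 1 D) e) := by
    intro k hk hkn
    rw [hπ _ (mem_Tconfig_nat.2 ⟨hk, hkn⟩) _ mem_Tconfig_I, lab_nat, lab_I]
  refine ⟨π, ?_, ?_, ?_⟩
  · intro j k l hj hjk hkl hl h
    rw [hnat _ _ (by omega) (by omega) (by omega) (by omega)] at h ⊢
    exact le_antisymm (cnt_mono _ hkl) (h ▸ cnt_mono _ hjk)
  · ext k
    rw [mem_dmap]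
    constructor
    · rintro ⟨⟨h2, hkn⟩, hne⟩
      rw [ne_eq, hnat _ _ (by omega) (by omega) (by omega) (by omega)] at hne
      by_contra hk
      obtain ⟨k, rfl⟩ : ∃ m, k = m + 1 := ⟨k - 1, by omega⟩
      refine hne (cnt_eq ?_)
      simp only [Finset.mem_insert, not_or]
      exact ⟨by omega, hk⟩
    · intro hk
      have hk' := Finset.mem_Icc.1 (hD hk)
      refine ⟨hk', ?_⟩
      rw [ne_eq, hnat _ _ (by omega) (by omega) (by omega) (by omega)]
      exact (cnt_lt (Finset.mem_insert_of_mem hk) (by omega)).ne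
  · rcases Finset.mem_insert.1 he with rfl | he
    · apply emap_eq_zero
      rintro ⟨k, ⟨hk, hkn⟩, h⟩
      rw [hI k hk hkn] at h
      have h1 : cnt (insert 1 D) 0 < cnt (insert 1 D) 1 := cnt_lt (by simp) (by omega)
      have h2 := cnt_mono (insert 1 D) hk
      omega
    · have hr : 1 ≤ e ∧ e ≤ n := by
        rcases Finset.mem_insert.1 he with rfl | h
        · exact ⟨le_rfl, hn⟩
        · have := Finset.mem_Icc.1 (hD h)
          omega
      apply emap_unique hr.1 hr.2
      · rw [hI e hr.1 hr.2]
      · intro j hj hj1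
        rw [ne_eq, hI j hj1 (by omega)]
        exact (cnt_lt he hj).ne

lemma sum_card_powerset (s : Finset ℕ) :
    2 * ∑ D ∈ s.powerset, (D.card + 2) = (s.card + 4) * 2 ^ s.card := by
  induction s using Finset.induction_on with
  | empty => simp
  | insert a s ha ih =>
    rw [Finset.sum_powerset_insert ha, Finset.card_insert_of_notMem ha]
    have : ∑ D ∈ s.powerset, ((insert a D).card + 2) = ∑ D ∈ s.powerset, (D.card + 2) + 2 ^ s.card := by
      rw [← Finset.card_powerset, Finset.card_eq_sum_ones, ← Finset.sum_add_distrib]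
      apply Finset.sum_congr rfl
      intro D hD
      rw [Finset.card_insert_of_notMem fun h => ha (Finset.mem_powerset.1 hD h)]
    rw [this, pow_succ]
    linarith

lemma card_NC_succ (m : ℕ) : 2 * Nat.card (NC (Tconfig (m + 1))) = (m + 4) * 2 ^ m := by
  let target : Finset (Σ _ : Finset ℕ, ℕ) :=
    (Finset.Icc 2 (m + 1)).powerset.sigma fun D => insert 0 (insert 1 D)
  have hcard : 2 * target.card = (m + 4) * 2 ^ m := by
    have h := sum_card_powerset (Finset.Icc 2 (m + 1))
    rw [Nat.card_Icc, show m + 1 + 1 - 2 = m by omega] at h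
    rw [← h, Finset.card_sigma]
    congr 1
    apply Finset.sum_congr rfl
    intro D hD
    have hD := Finset.mem_powerset.1 hD
    have h1 : 1 ∉ D := fun h => by simpa using hD h
    have h0 : 0 ∉ D := fun h => by simpa using hD h
    rw [Finset.card_insert_of_notMem (by simp [h0]), Finset.card_insert_of_notMem h1]
  have hd : ∀ π : Finpartition (Tconfig (m + 1)), dmap π ⊆ Finset.Icc 2 (m + 1) := by
    intro π k hk
    exact Finset.mem_Icc.2 (mem_dmap.1 hk).1
  let F : NC (Tconfig (m + 1)) → target := fun π =>
    ⟨⟨dmap π.1, emap π.1⟩, Finset.mem_sigma.2 ⟨Finset.mem_powerset.2 (hd _), emap_mem⟩⟩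
  have hF : Function.Bijective F := by
    constructor
    · intro π σ h
      have h' := congrArg Subtype.val h
      have h1 : dmap π.1 = dmap σ.1 := congrArg Sigma.fst h'
      have h2 : emap π.1 = emap σ.1 := congrArg (fun x : (Σ _ : Finset ℕ, ℕ) => x.2) h'
      exact Subtype.ext
        (map_injective ((isNoncrossing_iff _).1 π.2) ((isNoncrossing_iff _).1 σ.2) h1 h2)
    · rintro ⟨⟨D, e⟩, h⟩
      have h' := Finset.mem_sigma.1 h
      obtain ⟨π, hc, h1, h2⟩ :=
        map_surjective (n := m + 1) (by omega) (Finset.mem_powerset.1 h'.1) h'.2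
      refine ⟨⟨π, (isNoncrossing_iff _).2 hc⟩, ?_⟩
      apply Subtype.ext
      simp only [F]
      rw [h1, h2]
  rw [Nat.card_eq_of_bijective F hF, Nat.card_eq_fintype_card, Fintype.card_coe, hcard]

lemma card_NC_zero : Nat.card (NC (Tconfig 0)) = 1 := by
  rw [Nat.card_eq_one_iff_unique]
  have hall : ∀ π : Finpartition (Tconfig 0), LineConvex π := by
    intro π j k l h1 h2 h3 h4
    omega
  constructor
  · constructor
    intro π σ
    apply Subtype.ext
    apply finpartition_ext
    intro a ha b hb
    have : ∀ a ∈ Tconfig 0, a = Complex.I := by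
      intro a ha
      simpa [Tconfig] using ha
    rw [this a ha, this b hb]
    simp
  · obtain ⟨π, -⟩ := exists_finpartition (P := Tconfig 0) (fun _ => 0)
    exact ⟨⟨π, (isNoncrossing_iff _).2 (hall π)⟩⟩

/-- In `ℤ⟦X⟧`, the generating function `T(X) = Σ t_n X^n` of `t_n = |NC(T_n)|`
satisfies `(1 - 2X)^2 ⬝ T(X) = (1 - X)^2`, i.e. `T(X) = (1-X)^2/(1-2X)^2`. -/
theorem nc_T_generating_function :
    (1 - 2 * PowerSeries.X : PowerSeries ℤ) ^ 2 *
        PowerSeries.mk (fun n => (Nat.card (NC (Tconfig n)) : ℤ)) =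
      (1 - PowerSeries.X) ^ 2 := by
  set t : ℕ → ℤ := fun n => (Nat.card (NC (Tconfig n)) : ℤ) with ht
  have t0 : t 0 = 1 := by simp [ht, card_NC_zero]
  have ts : ∀ m, 2 * t (m + 1) = (m + 4) * 2 ^ m := by
    intro m
    have := card_NC_succ m
    simp only [ht]
    exact_mod_cast this
  have t1 : t 1 = 2 := by
    have := ts 0
    norm_num at this
    linarith
  have t2 : t 2 = 5 := by
    have := ts 1
    norm_num at this
    linarith
  have e1 : (1 - 2 * PowerSeries.X : PowerSeries ℤ) ^ 2 * PowerSeries.mk t =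
      PowerSeries.mk t - PowerSeries.C 4 * (PowerSeries.X * PowerSeries.mk t) +
        PowerSeries.C 4 * (PowerSeries.X * (PowerSeries.X * PowerSeries.mk t)) := by
    have : (PowerSeries.C 4 : PowerSeries ℤ) = 4 := by simp
    rw [this]
    ring
  have e2 : (1 - PowerSeries.X : PowerSeries ℤ) ^ 2 =
      1 - PowerSeries.C 2 * PowerSeries.X + PowerSeries.X ^ 2 := by
    have : (PowerSeries.C 2 : PowerSeries ℤ) = 2 := by simp
    rw [this]
    ring
  rw [e1, e2]
  ext n
  match n with
  | 0 => simp [t0]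
  | 0 + 1 =>
    simp only [map_add, map_sub, PowerSeries.coeff_C_mul, PowerSeries.coeff_succ_X_mul,
      PowerSeries.coeff_zero_X_mul, PowerSeries.coeff_mk, PowerSeries.coeff_one,
      PowerSeries.coeff_X_pow, PowerSeries.coeff_X]
    norm_num [t0, t1]
  | 0 + 1 + 1 =>
    simp only [map_add, map_sub, PowerSeries.coeff_C_mul, PowerSeries.coeff_succ_X_mul,
      PowerSeries.coeff_zero_X_mul, PowerSeries.coeff_mk, PowerSeries.coeff_one,
      PowerSeries.coeff_X_pow, PowerSeries.coeff_X]
    norm_num [t0, t1, t2]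
  | m + 3 =>
    have h0 := ts m
    have h1 := ts (m + 1)
    have h2 := ts (m + 2)
    simp only [map_add, map_sub, PowerSeries.coeff_C_mul, PowerSeries.coeff_succ_X_mul,
      PowerSeries.coeff_mk, PowerSeries.coeff_one, PowerSeries.coeff_X_pow, PowerSeries.coeff_X]
    simp only [show m + 3 ≠ 0 by omega, show m + 3 ≠ 1 by omega, show m + 3 ≠ 2 by omega, if_false]
    push_cast at h0 h1 h2
    rw [pow_succ] at h1
    rw [pow_succ, pow_succ] at h2
    rw [show m + 1 + 1 = m + 2 by omega] at h1
    rw [show m + 2 + 1 = m + 3 by omega] at h2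
    linarith
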